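/- Let F : ℝ^n ⇒ ℝ^p be a nearly convex set-valued mapping and let Ω ⊆ ℝ^n be a nearly convex set. If ri(dom F) ∩ ri Ω ≠ ∅, then ri(F(Ω)) = ⋃_{x ∈ (ri Ω) ∩ ri(dom F)} ri F(x), where F(Ω) = ⋃_{x ∈ Ω} F(x). -/

import Mathlib

/-!
For a nearly convex set `S`, the open segment from a point of `ri S` to one of `S` stays in `ri S`.
Consequently `a ∈ S` lies in `ri S` exactly when every segment from a point of `S` to `a` can be
prolonged beyond `a` inside `S`. It follows that `ri` commutes with affine images, and with
intersections of sets whose relative interiors meet.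

Now `F(Ω)` is the projection of `gph F ∩ (Ω × ℝ^p)` to `ℝ^p`, and `ri (dom F)` is the projection of
`ri (gph F)` to `ℝ^n`, so the qualification condition makes the relative interiors of `gph F` and
`Ω × ℝ^p` meet. Hence `ri F(Ω)` consists of the `y` with `(x, y) ∈ ri (gph F)` for some `x ∈ ri Ω`.
For `Ω = {x}` with `x ∈ ri (dom F)` this identifies `ri F(x)` with the fibre of `ri (gph F)` over
`x`, and the two descriptions combine.
-/

open Set Metric

noncomputable section

/-- A set is *nearly convex* if it lies between a convex set and its closure. -/
def NearlyConvex {E : Type*} [NormedAddCommGroup E] [NormedSpace ℝ E] (s : Set E) : Prop :=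
  ∃ C : Set E, Convex ℝ C ∧ C ⊆ s ∧ s ⊆ closure C

/-- The *relative interior* of a set: points `a ∈ s` admitting `δ > 0` with
`B(a,δ) ∩ aff s ⊆ s`. -/
def ri {E : Type*} [NormedAddCommGroup E] [NormedSpace ℝ E] (s : Set E) : Set E :=
  {a | a ∈ s ∧ ∃ δ > 0, Metric.ball a δ ∩ (affineSpan ℝ s : Set E) ⊆ s}

/-- The graph of a set-valued mapping. -/
def gph {E P : Type*} (F : E → Set P) : Set (E × P) := {q | q.2 ∈ F q.1}

/-- The domain of a set-valued mapping. -/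
def domSV {E P : Type*} (F : E → Set P) : Set E := {x | (F x).Nonempty}

open Filter Topology AffineMap

section RelativeInterior

variable {E P : Type*} [NormedAddCommGroup E] [NormedSpace ℝ E]
  [NormedAddCommGroup P] [NormedSpace ℝ P] {s t : Set E} {a y : E}

lemma ri_subset (s : Set E) : ri s ⊆ s := fun _ h ↦ h.1

lemma mem_ri_iff_mem_nhdsWithin : a ∈ ri s ↔ a ∈ s ∧ s ∈ 𝓝[affineSpan ℝ s] a := by
  rw [Metric.mem_nhdsWithin_iff, ri, mem_ofPred_eq]

lemma ri_eq_intrinsicInterior (s : Set E) : ri s = intrinsicInterior ℝ s := by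
  ext a
  simp only [mem_ri_iff_mem_nhdsWithin, mem_intrinsicInterior, mem_interior_iff_mem_nhds]
  constructor
  · rintro ⟨has, hnhds⟩
    exact ⟨⟨a, subset_affineSpan ℝ s has⟩, preimage_coe_mem_nhds_subtype.2 hnhds, rfl⟩
  · rintro ⟨b, hnhds, rfl⟩
    exact ⟨mem_of_mem_nhds (s := Subtype.val ⁻¹' s) hnhds,
      preimage_coe_mem_nhds_subtype.1 hnhds⟩

lemma ri_singleton (x : E) : ri {x} = {x} := by
  rw [ri_eq_intrinsicInterior, intrinsicInterior_singleton]

lemma ri_univ : ri (univ : Set E) = univ := by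
  rw [ri_eq_intrinsicInterior]
  exact univ_subset_iff.1 (interior_univ.symm.subset.trans interior_subset_intrinsicInterior)

lemma ri_prod (s : Set E) (u : Set P) : ri (s ×ˢ u) = ri s ×ˢ ri u := by
  simp only [ri_eq_intrinsicInterior, intrinsicInterior_prod_eq]

lemma ri_inter_ri_subset (s t : Set E) : ri s ∩ ri t ⊆ ri (s ∩ t) := by
  rintro a ⟨has, hat⟩
  rw [mem_ri_iff_mem_nhdsWithin] at has hat ⊢
  have restrict {u : Set E} (hst : s ∩ t ⊆ u) : 𝓝[affineSpan ℝ (s ∩ t)] a ≤ 𝓝[affineSpan ℝ u] a :=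
    nhdsWithin_mono a (affineSpan_mono ℝ hst)
  exact ⟨⟨has.1, hat.1⟩,
    inter_mem (restrict inter_subset_left has.2) (restrict inter_subset_right hat.2)⟩

lemma mem_openSegment_lineMap {r : ℝ} (hr : 1 < r) (y a : E) :
    a ∈ openSegment ℝ y (lineMap y a r) := by
  have hr₀ : 0 < r := one_pos.trans hr
  rw [openSegment_eq_image_lineMap]
  refine ⟨r⁻¹, ⟨inv_pos.2 hr₀, inv_lt_one_of_one_lt₀ hr⟩, ?_⟩
  rw [lineMap_lineMap_right, inv_mul_cancel₀ hr₀.ne', lineMap_apply_one]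

lemma exists_mem_openSegment_of_mem_ri (ha : a ∈ ri s) (hy : y ∈ s) :
    ∃ z ∈ s, a ∈ openSegment ℝ y z := by
  obtain ⟨has, hnhds⟩ := mem_ri_iff_mem_nhdsWithin.1 ha
  have line_mem_span (r : ℝ) : lineMap y a r ∈ affineSpan ℝ s :=
    lineMap_mem r (subset_affineSpan ℝ s hy) (subset_affineSpan ℝ s has)
  have line_tendsto : Tendsto (lineMap y a) (𝓝 (1 : ℝ)) (𝓝[affineSpan ℝ s] a) :=
    tendsto_nhdsWithin_iff.2
      ⟨by simpa using (lineMap_continuous (p := y) (q := a)).tendsto (1 : ℝ),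
        .of_forall line_mem_span⟩
  obtain ⟨r, hr, hrs⟩ := ((line_tendsto.eventually hnhds).filter_mono nhdsWithin_le_nhds |>.and
    (self_mem_nhdsWithin (a := (1 : ℝ)) (s := Ioi 1))).exists
  exact ⟨_, hr, mem_openSegment_lineMap hrs y a⟩

section FiniteDimensional

variable [FiniteDimensional ℝ E] {C S : Set E} {z : E}

lemma closure_subset_affineSpan (s : Set E) : closure s ⊆ affineSpan ℝ s :=
  closure_minimal (subset_affineSpan ℝ s) (affineSpan ℝ s).closed_of_finiteDimensional

lemma ri_nonempty_of_convex (hC : Convex ℝ C) (hne : C.Nonempty) : (ri C).Nonempty := by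
  rw [ri_eq_intrinsicInterior]
  exact hne.intrinsicInterior hC

lemma openSegment_ri_closure_subset_ri (hC : Convex ℝ C) (hy : y ∈ ri C) (hz : z ∈ closure C) :
    openSegment ℝ y z ⊆ ri C := by
  obtain ⟨hyC, hnhds⟩ := mem_ri_iff_mem_nhdsWithin.1 hy
  rw [openSegment_symm, openSegment_eq_image_lineMap]
  rintro _ ⟨r, hr, rfl⟩
  set a := lineMap z y r
  have ha : a ∈ affineSpan ℝ C :=
    lineMap_mem r (closure_subset_affineSpan C hz) (subset_affineSpan ℝ C hyC)
  -- A point `v` near `a` lies on the segment from `w ∈ C` near `z` to the point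
  -- `lineMap w v r⁻¹`, which is near `y` and hence in `C`.
  have tendsto_y : Tendsto (fun p : E × E ↦ lineMap p.2 p.1 r⁻¹)
      (𝓝[affineSpan ℝ C] a ×ˢ 𝓝[C] z) (𝓝[affineSpan ℝ C] y) := by
    refine tendsto_nhdsWithin_iff.2 ⟨?_, ?_⟩
    · have hcont : Continuous fun p : E × E ↦ lineMap p.2 p.1 r⁻¹ := by
        simp only [lineMap_apply_module']
        fun_prop
      have hlim := hcont.tendsto (a, z)
      simp only [a, lineMap_lineMap_right, inv_mul_cancel₀ hr.1.ne', lineMap_apply_one] at hlim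
      rw [nhds_prod_eq] at hlim
      exact hlim.mono_left (prod_mono nhdsWithin_le_nhds nhdsWithin_le_nhds)
    · filter_upwards [prod_mem_prod self_mem_nhdsWithin self_mem_nhdsWithin] with p hp
      exact lineMap_mem _ (subset_affineSpan ℝ C hp.2) hp.1
  have eventually_mem : ∀ᶠ v in 𝓝[affineSpan ℝ C] a, v ∈ C := by
    have : (𝓝[C] z).NeBot := mem_closure_iff_nhdsWithin_neBot.1 hz
    filter_upwards [(tendsto_y.eventually hnhds).curry] with v hv
    obtain ⟨w, hvw, hw⟩ := (hv.and self_mem_nhdsWithin).exists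
    have hv_eq : lineMap w (lineMap w v r⁻¹) r = v := by
      rw [lineMap_lineMap_right, mul_inv_cancel₀ hr.1.ne', lineMap_apply_one]
    exact hv_eq ▸ hC.lineMap_mem hw hvw ⟨hr.1.le, hr.2.le⟩
  exact mem_ri_iff_mem_nhdsWithin.2 ⟨eventually_mem.self_of_nhdsWithin ha, eventually_mem⟩

lemma ri_eq_ri_of_convex_of_subset_closure (hC : Convex ℝ C) (hCS : C ⊆ S)
    (hSC : S ⊆ closure C) : ri S = ri C := by
  have span_eq : affineSpan ℝ S = affineSpan ℝ C :=
    (affineSpan_le.2 (hSC.trans (closure_subset_affineSpan C))).antisymm (affineSpan_mono ℝ hCS)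
  refine Subset.antisymm (fun a ha ↦ ?_) (fun a ha ↦ ?_)
  · obtain ⟨c, hc⟩ := ri_nonempty_of_convex hC (closure_nonempty_iff.1 ⟨a, hSC ha.1⟩)
    obtain ⟨z, hzS, haz⟩ := exists_mem_openSegment_of_mem_ri ha (hCS hc.1)
    exact openSegment_ri_closure_subset_ri hC hc (hSC hzS) haz
  · rw [mem_ri_iff_mem_nhdsWithin] at ha ⊢
    rw [span_eq]
    exact ⟨hCS ha.1, mem_of_superset ha.2 hCS⟩

end FiniteDimensional

end RelativeInterior

section NearlyConvexSet

variable {E P : Type*} [NormedAddCommGroup E] [NormedSpace ℝ E]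
  [NormedAddCommGroup P] [NormedSpace ℝ P]

lemma nearlyConvex_of_convex {S : Set E} (hS : Convex ℝ S) : NearlyConvex S :=
  ⟨S, hS, subset_rfl, subset_closure⟩

namespace NearlyConvex

lemma prod {S : Set E} {U : Set P} (hS : NearlyConvex S) (hU : NearlyConvex U) :
    NearlyConvex (S ×ˢ U) := by
  obtain ⟨C, hC, hCS, hSC⟩ := hS
  obtain ⟨D, hD, hDU, hUD⟩ := hU
  refine ⟨C ×ˢ D, hC.prod hD, prod_mono hCS hDU, ?_⟩
  rw [closure_prod_eq]
  exact prod_mono hSC hUD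

variable [FiniteDimensional ℝ E] {S T : Set E} {a y z : E}

lemma image (hS : NearlyConvex S) (f : E →ᵃ[ℝ] P) : NearlyConvex (f '' S) := by
  obtain ⟨C, hC, hCS, hSC⟩ := hS
  exact ⟨f '' C, hC.affine_image f, image_mono hCS,
    (image_mono hSC).trans (image_closure_subset_closure_image f.continuous_of_finiteDimensional)⟩

lemma ri_nonempty (hS : NearlyConvex S) (hne : S.Nonempty) : (ri S).Nonempty := by
  obtain ⟨C, hC, hCS, hSC⟩ := hS
  rw [ri_eq_ri_of_convex_of_subset_closure hC hCS hSC]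
  exact ri_nonempty_of_convex hC (closure_nonempty_iff.1 (hne.mono hSC))

lemma openSegment_subset_ri (hS : NearlyConvex S) (hy : y ∈ ri S) (hz : z ∈ S) :
    openSegment ℝ y z ⊆ ri S := by
  obtain ⟨C, hC, hCS, hSC⟩ := hS
  rw [ri_eq_ri_of_convex_of_subset_closure hC hCS hSC] at hy ⊢
  exact openSegment_ri_closure_subset_ri hC hy (hSC hz)

lemma convex_ri (hS : NearlyConvex S) : Convex ℝ (ri S) :=
  convex_iff_openSegment_subset.2 fun _ hy _ hz ↦ hS.openSegment_subset_ri hy hz.1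

lemma mem_ri_iff (hS : NearlyConvex S) :
    a ∈ ri S ↔ a ∈ S ∧ ∀ y ∈ S, ∃ z ∈ S, a ∈ openSegment ℝ y z := by
  refine ⟨fun ha ↦ ⟨ha.1, fun y hy ↦ exists_mem_openSegment_of_mem_ri ha hy⟩, ?_⟩
  rintro ⟨haS, hprolong⟩
  obtain ⟨y, hy⟩ := hS.ri_nonempty ⟨a, haS⟩
  obtain ⟨z, hz, haz⟩ := hprolong y hy.1
  exact hS.openSegment_subset_ri hy hz haz

lemma ri_image [FiniteDimensional ℝ P] (hS : NearlyConvex S) (f : E →ᵃ[ℝ] P) :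
    ri (f '' S) = f '' ri S := by
  apply Subset.antisymm
  · intro b hb
    obtain ⟨y, hy⟩ := hS.ri_nonempty (image_nonempty.1 ⟨b, hb.1⟩)
    obtain ⟨_, ⟨z, hz, rfl⟩, hbz⟩ :=
      exists_mem_openSegment_of_mem_ri hb (mem_image_of_mem f hy.1)
    rw [← image_openSegment] at hbz
    exact image_mono (hS.openSegment_subset_ri hy hz) hbz
  · rintro _ ⟨a, ha, rfl⟩
    refine (hS.image f).mem_ri_iff.2 ⟨mem_image_of_mem f ha.1, ?_⟩
    rintro _ ⟨y, hy, rfl⟩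
    obtain ⟨z, hz, haz⟩ := exists_mem_openSegment_of_mem_ri ha hy
    exact ⟨f z, mem_image_of_mem f hz, image_openSegment ℝ f y z ▸ mem_image_of_mem f haz⟩

lemma inter (hS : NearlyConvex S) (hT : NearlyConvex T) (hne : (ri S ∩ ri T).Nonempty) :
    NearlyConvex (S ∩ T) := by
  obtain ⟨y, hyS, hyT⟩ := hne
  refine ⟨ri S ∩ ri T, hS.convex_ri.inter hT.convex_ri,
    inter_subset_inter (ri_subset S) (ri_subset T), fun x hx ↦ ?_⟩
  have segment_subset : openSegment ℝ y x ⊆ ri S ∩ ri T :=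
    subset_inter (hS.openSegment_subset_ri hyS hx.1) (hT.openSegment_subset_ri hyT hx.2)
  exact closure_mono segment_subset (closure_openSegment (𝕜 := ℝ) y x ▸ right_mem_segment ℝ y x)

lemma ri_inter (hS : NearlyConvex S) (hT : NearlyConvex T) (hne : (ri S ∩ ri T).Nonempty) :
    ri (S ∩ T) = ri S ∩ ri T := by
  refine Subset.antisymm (fun a ha ↦ ?_) (ri_inter_ri_subset S T)
  obtain ⟨y, hyS, hyT⟩ := hne
  obtain ⟨z, hz, haz⟩ := exists_mem_openSegment_of_mem_ri ha ⟨hyS.1, hyT.1⟩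
  exact ⟨hS.openSegment_subset_ri hyS hz.1 haz, hT.openSegment_subset_ri hyT hz.2 haz⟩

end NearlyConvex

end NearlyConvexSet

section SetValued

lemma domSV_eq_image_fst_gph {X Y : Type*} (F : X → Set Y) : domSV F = Prod.fst '' gph F := by
  ext x
  simp [domSV, gph, Set.Nonempty]

lemma biUnion_eq_image_snd_gph_inter {X Y : Type*} (F : X → Set Y) (Ω : Set X) :
    ⋃ x ∈ Ω, F x = Prod.snd '' (gph F ∩ Ω ×ˢ univ) := by
  ext y
  simp [gph, and_comm]

variable {E P : Type*} [NormedAddCommGroup E] [NormedSpace ℝ E] [FiniteDimensional ℝ E]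
  [NormedAddCommGroup P] [NormedSpace ℝ P] [FiniteDimensional ℝ P]
  {F : E → Set P} {Ω : Set E}

lemma ri_domSV (hF : NearlyConvex (gph F)) : ri (domSV F) = Prod.fst '' ri (gph F) := by
  rw [domSV_eq_image_fst_gph]
  exact hF.ri_image (LinearMap.fst ℝ E P).toAffineMap

lemma ri_biUnion_eq_biUnion_preimage_ri_gph (hF : NearlyConvex (gph F)) (hΩ : NearlyConvex Ω)
    (hqc : (ri (domSV F) ∩ ri Ω).Nonempty) :
    ri (⋃ x ∈ Ω, F x) = ⋃ x ∈ ri Ω, Prod.mk x ⁻¹' ri (gph F) := by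
  have hcyl : NearlyConvex (Ω ×ˢ (univ : Set P)) := hΩ.prod (nearlyConvex_of_convex convex_univ)
  have ri_cyl : ri (Ω ×ˢ (univ : Set P)) = ri Ω ×ˢ univ := by rw [ri_prod, ri_univ]
  have hmeet : (ri (gph F) ∩ ri (Ω ×ˢ (univ : Set P))).Nonempty := by
    rw [ri_domSV hF] at hqc
    obtain ⟨_, ⟨q, hq, rfl⟩, hqΩ⟩ := hqc
    exact ⟨q, hq, ri_cyl ▸ ⟨hqΩ, mem_univ _⟩⟩
  calc ri (⋃ x ∈ Ω, F x)
      = ri (Prod.snd '' (gph F ∩ Ω ×ˢ univ)) := by rw [biUnion_eq_image_snd_gph_inter]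
    _ = Prod.snd '' ri (gph F ∩ Ω ×ˢ univ) :=
        (hF.inter hcyl hmeet).ri_image (LinearMap.snd ℝ E P).toAffineMap
    _ = Prod.snd '' (ri (gph F) ∩ ri Ω ×ˢ univ) := by rw [hF.ri_inter hcyl hmeet, ri_cyl]
    _ = ⋃ x ∈ ri Ω, Prod.mk x ⁻¹' ri (gph F) :=
        (biUnion_eq_image_snd_gph_inter (fun x ↦ Prod.mk x ⁻¹' ri (gph F)) (ri Ω)).symm

lemma ri_apply_eq_preimage_ri_gph (hF : NearlyConvex (gph F)) {x : E} (hx : x ∈ ri (domSV F)) :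
    ri (F x) = Prod.mk x ⁻¹' ri (gph F) := by
  have hmeet : (ri (domSV F) ∩ ri {x}).Nonempty := ⟨x, hx, (ri_singleton x).symm ▸ rfl⟩
  simpa only [ri_singleton, biUnion_singleton] using
    ri_biUnion_eq_biUnion_preimage_ri_gph hF (nearlyConvex_of_convex (convex_singleton x)) hmeet

theorem ri_image_of_nearlyConvex_general (hF : NearlyConvex (gph F)) (hΩ : NearlyConvex Ω)
    (hqc : (ri (domSV F) ∩ ri Ω).Nonempty) :
    ri (⋃ x ∈ Ω, F x) = ⋃ x ∈ ri Ω ∩ ri (domSV F), ri (F x) := by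
  have fibre_base {x : E} {y : P} (hxy : (x, y) ∈ ri (gph F)) : x ∈ ri (domSV F) :=
    ri_domSV hF ▸ mem_image_of_mem Prod.fst hxy
  calc ri (⋃ x ∈ Ω, F x)
      = ⋃ x ∈ ri Ω, Prod.mk x ⁻¹' ri (gph F) := ri_biUnion_eq_biUnion_preimage_ri_gph hF hΩ hqc
    _ = ⋃ x ∈ ri Ω ∩ ri (domSV F), Prod.mk x ⁻¹' ri (gph F) := by
        ext y
        simp only [mem_iUnion₂, mem_preimage, exists_prop, mem_inter_iff]
        exact exists_congr fun x ↦
          ⟨fun h ↦ ⟨⟨h.1, fibre_base h.2⟩, h.2⟩, fun h ↦ ⟨h.1.1, h.2⟩⟩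
    _ = ⋃ x ∈ ri Ω ∩ ri (domSV F), ri (F x) :=
        iUnion₂_congr fun x hx ↦ (ri_apply_eq_preimage_ri_gph hF hx.2).symm

end SetValued

theorem ri_image_of_nearlyConvex (n p : ℕ)
    (F : EuclideanSpace ℝ (Fin n) → Set (EuclideanSpace ℝ (Fin p)))
    (Ω : Set (EuclideanSpace ℝ (Fin n)))
    (hF : NearlyConvex (gph F)) (hΩ : NearlyConvex Ω)
    (hqc : (ri (domSV F) ∩ ri Ω).Nonempty) :
    ri (⋃ x ∈ Ω, F x) = ⋃ x ∈ ri Ω ∩ ri (domSV F), ri (F x) :=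
  ri_image_of_nearlyConvex_general hF hΩ hqc
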